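/- Let n ≥ 1, let A and P be n×n real symmetric positive definite matrices, and set c = trace(P⁻¹·A)/n. Then D_LD(A,P) − D_LD(A, c·P) = n·(c − 1 − ln c); in particular D_LD(A, c·P) ≤ D_LD(A,P), with equality if and only if c = 1. -/

import Mathlib

open Matrix

/-- Bregman log determinant divergence. -/
noncomputable def DLD {n : ℕ} (A P : Matrix (Fin n) (Fin n) ℝ) : ℝ :=
  (A * P⁻¹).trace - Real.log (A * P⁻¹).det - n

/-!
Replacing `P` by `c • P` scales the trace term of the divergence by `c⁻¹` and adds `n * log c`.
For `c = trace (P⁻¹ * A) / n` the trace term drops from `n * c` to `n`, so the divergence drops by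
`n * (c - 1 - log c)`, and `log c ≤ c - 1` with equality only at `c = 1`.
-/

theorem log_eq_sub_one_iff {x : ℝ} (hx : 0 < x) : Real.log x = x - 1 ↔ x = 1 := by
  refine ⟨fun h ↦ ?_, fun h ↦ by simp [h]⟩
  by_contra hne
  exact (Real.log_lt_sub_one_of_pos hx hne).ne h

open scoped ComplexOrder MatrixOrder in
theorem trace_mul_pos_of_posDef {ι 𝕜 : Type*} [Fintype ι] [Nonempty ι] [RCLike 𝕜]
    {A B : Matrix ι ι 𝕜} (hA : A.PosDef) (hB : B.PosDef) : 0 < (A * B).trace := by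
  classical
  obtain ⟨S, hS, hAS⟩ : ∃ S : Matrix ι ι 𝕜, IsUnit S ∧ A = Sᴴ * S :=
    CStarAlgebra.isStrictlyPositive_iff_eq_star_mul_self.mp hA.isStrictlyPositive
  have hSBS : (S * B * Sᴴ).PosDef :=
    hB.mul_mul_conjTranspose_same (vecMul_injective_of_isUnit hS)
  calc 0 < (S * B * Sᴴ).trace := hSBS.trace_pos
    _ = (A * B).trace := by rw [trace_mul_comm, ← Matrix.mul_assoc, ← hAS]

section Scaling

variable {n : ℕ} {A P : Matrix (Fin n) (Fin n) ℝ} {c : ℝ}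

theorem DLD_smul_right (hdet : (A * P⁻¹).det ≠ 0) (hc : c ≠ 0) :
    DLD A (c • P) =
      c⁻¹ * (A * P⁻¹).trace - Real.log (A * P⁻¹).det + n * Real.log c - n := by
  have hP : IsUnit P.det := by
    rw [det_mul] at hdet
    exact isUnit_nonsing_inv_det_iff.mp (right_ne_zero_of_mul hdet).isUnit
  have hinv : (c • P)⁻¹ = c⁻¹ • P⁻¹ := inv_smul' P (Units.mk0 c hc) hP
  have hlog : Real.log (c⁻¹ • (A * P⁻¹)).det =
      Real.log (A * P⁻¹).det - n * Real.log c := by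
    rw [det_smul, Fintype.card_fin, Real.log_mul (pow_ne_zero n (inv_ne_zero hc)) hdet,
      Real.log_pow, Real.log_inv]
    ring
  rw [DLD, hinv, Matrix.mul_smul, trace_smul, hlog, smul_eq_mul]
  ring

theorem DLD_sub_DLD_smul_right (hdet : (A * P⁻¹).det ≠ 0) (hc : c ≠ 0)
    (htrace : (A * P⁻¹).trace = n * c) :
    DLD A P - DLD A (c • P) = n * (c - 1 - Real.log c) := by
  rw [DLD_smul_right hdet hc, DLD, htrace]
  field_simp
  ring

theorem stmt_18_general (hdet : 0 < (A * P⁻¹).det) (htrace : 0 < (P⁻¹ * A).trace)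
    (hc : c = (P⁻¹ * A).trace / n) :
    DLD A P - DLD A (c • P) = n * (c - 1 - Real.log c) ∧
    DLD A (c • P) ≤ DLD A P ∧
    (DLD A (c • P) = DLD A P ↔ c = 1) := by
  have hn : (0 : ℝ) < n := by
    rcases n.eq_zero_or_pos with rfl | hn
    · simp at htrace
    · exact_mod_cast hn
  have hc_pos : 0 < c := hc ▸ div_pos htrace hn
  have htrace_eq : (A * P⁻¹).trace = n * c := by
    rw [trace_mul_comm, hc, mul_div_cancel₀ _ hn.ne']
  have hdrop := DLD_sub_DLD_smul_right hdet.ne' hc_pos.ne' htrace_eq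
  refine ⟨hdrop, ?_, ?_⟩
  · rw [← sub_nonneg, hdrop]
    exact mul_nonneg hn.le (sub_nonneg.mpr (Real.log_le_sub_one_of_pos hc_pos))
  · rw [eq_comm, ← sub_eq_zero, hdrop, mul_eq_zero_iff_left hn.ne', sub_eq_zero, eq_comm,
      log_eq_sub_one_iff hc_pos]

end Scaling

/-- with `c = trace(P⁻¹·A)/n`,
`D_LD(A,P) − D_LD(A, c·P) = n·(c − 1 − ln c)`; in particular
`D_LD(A, c·P) ≤ D_LD(A,P)`, with equality iff `c = 1`. -/
theorem stmt_18 (n : ℕ) (hn : 1 ≤ n) (A P : Matrix (Fin n) (Fin n) ℝ)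
    (hA : A.PosDef) (hP : P.PosDef)
    (c : ℝ) (hc : c = (P⁻¹ * A).trace / n) :
    DLD A P - DLD A (c • P) = n * (c - 1 - Real.log c) ∧
    DLD A (c • P) ≤ DLD A P ∧
    (DLD A (c • P) = DLD A P ↔ c = 1) := by
  have : Nonempty (Fin n) := ⟨⟨0, hn⟩⟩
  have hdet : 0 < (A * P⁻¹).det := det_mul A P⁻¹ ▸ mul_pos hA.det_pos hP.inv.det_pos
  exact stmt_18_general hdet (trace_mul_pos_of_posDef hP.inv hA) hc
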